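/- Let p ≥ 1, let ν be a finite signed Borel measure on [0,∞), f : [0,∞) → ℝ locally integrable, and let x : [0,∞) → ℝ be locally absolutely continuous with x(0) = ξ and x′(t) = ∫_{[0,t]} x(t−s) dν(s) + f(t) for almost every t > 0. If x ∈ L^p([0,∞)), then for every θ ∈ (0,1] the function t ↦ ∫_t^{t+θ} f(s) ds belongs to L^p([0,∞)). -/

import Mathlib

/-!
Writing `g(t) = ∫_{[0,t]} x(t - s) dν(s)`, integration of the equation over `[t, t + θ]` gives
`∫_t^{t+θ} f = x(t + θ) - x(t) - ∫_t^{t+θ} g`. The first two terms are in `L^p` by assumption. Both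
`g` and its moving integral are averages of translates of an `L^p` function against a finite
measure, hence in `L^p` because translation preserves the `L^p` norm.
-/

open MeasureTheory Set Filter

/-- The integral of `g` over the set `A` against the finite signed Borel measure `ν`,
defined through the Jordan decomposition `ν = ν⁺ - ν⁻`. -/
noncomputable def signedSetIntegral (ν : MeasureTheory.SignedMeasure ℝ) (g : ℝ → ℝ)
    (A : Set ℝ) : ℝ :=
  (∫ s in A, g s ∂ν.toJordanDecomposition.posPart)
    - ∫ s in A, g s ∂ν.toJordanDecomposition.negPart

open scoped ENNReal

section AveragesOfLp

variable {α β E : Type*} [MeasurableSpace α] [MeasurableSpace β] [NormedAddCommGroup E]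
  {ρ : Measure α} {μ : Measure β}

lemma ae_ae_enorm_le_of_ae_eLpNorm_top_le [SFinite ρ] [SFinite μ] {F : α × β → E}
    (hF : AEStronglyMeasurable F (ρ.prod μ)) {C : ℝ≥0∞}
    (hC : ∀ᵐ b ∂μ, eLpNorm (fun a ↦ F (a, b)) ∞ ρ ≤ C) :
    ∀ᵐ a ∂ρ, ∀ᵐ b ∂μ, ‖F (a, b)‖ₑ ≤ C := by
  -- `{z | ‖F z‖ₑ ≤ C}` need not be measurable, so the quantifiers are exchanged by applying Tonelli
  -- to the truncated difference `‖F z‖ₑ - C`.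
  have hmeas : AEMeasurable (fun z ↦ ‖F z‖ₑ - C) (ρ.prod μ) := hF.enorm.sub aemeasurable_const
  have hzero : ∫⁻ z, (‖F z‖ₑ - C) ∂ρ.prod μ = 0 := by
    rw [lintegral_prod_symm _ hmeas]
    refine lintegral_eq_zero_of_ae_eq_zero ?_
    filter_upwards [hC] with b hb
    rw [eLpNorm_exponent_top] at hb
    refine lintegral_eq_zero_of_ae_eq_zero ?_
    filter_upwards [ae_le_eLpNormEssSup (f := fun a ↦ F (a, b)) (μ := ρ)] with a ha
    exact tsub_eq_zero_of_le (ha.trans hb)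
  filter_upwards [Measure.ae_ae_of_ae_prod ((lintegral_eq_zero_iff' hmeas).1 hzero)] with a ha
  filter_upwards [ha] with b hb
  exact tsub_eq_zero_iff_le.1 hb

variable [NormedSpace ℝ E]

lemma enorm_integral_rpow_le_lintegral_mul_measure_univ {q : ℝ} (hq : 1 ≤ q) {g : β → E}
    (hg : AEStronglyMeasurable g μ) :
    ‖∫ b, g b ∂μ‖ₑ ^ q ≤ (∫⁻ b, ‖g b‖ₑ ^ q ∂μ) * μ univ ^ (q - 1) := by
  have hq0 : 0 < q := one_pos.trans_le hq
  have hexp : (1 - 1 / q) * q = q - 1 := by field_simp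
  calc ‖∫ b, g b ∂μ‖ₑ ^ q
      ≤ (∫⁻ b, ‖g b‖ₑ ∂μ) ^ q := by gcongr; exact enorm_integral_le_lintegral_enorm g
    _ = eLpNorm' g 1 μ ^ q := by rw [eLpNorm'_eq_lintegral_enorm]; simp
    _ ≤ (eLpNorm' g q μ * μ univ ^ (1 / 1 - 1 / q)) ^ q := by
        gcongr; exact eLpNorm'_le_eLpNorm'_mul_rpow_measure_univ one_pos hq hg
    _ = (∫⁻ b, ‖g b‖ₑ ^ q ∂μ) * μ univ ^ (q - 1) := by
        rw [ENNReal.mul_rpow_of_nonneg _ _ hq0.le, lintegral_rpow_enorm_eq_rpow_eLpNorm' hq0,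
          ← ENNReal.rpow_mul, one_div_one, hexp]

variable [SFinite ρ] [SFinite μ]

lemma lintegral_enorm_integral_rpow_le {q : ℝ} (hq : 1 ≤ q) {F : α × β → E}
    (hF : AEStronglyMeasurable F (ρ.prod μ)) {C : ℝ≥0∞}
    (hC : ∀ᵐ b ∂μ, ∫⁻ a, ‖F (a, b)‖ₑ ^ q ∂ρ ≤ C ^ q) :
    ∫⁻ a, ‖∫ b, F (a, b) ∂μ‖ₑ ^ q ∂ρ ≤ (C * μ univ) ^ q := by
  have hFq : AEMeasurable (fun z ↦ ‖F z‖ₑ ^ q) (ρ.prod μ) := hF.enorm.pow_const q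
  calc ∫⁻ a, ‖∫ b, F (a, b) ∂μ‖ₑ ^ q ∂ρ
      ≤ ∫⁻ a, (∫⁻ b, ‖F (a, b)‖ₑ ^ q ∂μ) * μ univ ^ (q - 1) ∂ρ := by
        refine lintegral_mono_ae ?_
        filter_upwards [hF.prodMk_left] with a ha
        exact enorm_integral_rpow_le_lintegral_mul_measure_univ hq ha
    _ = (∫⁻ b, ∫⁻ a, ‖F (a, b)‖ₑ ^ q ∂ρ ∂μ) * μ univ ^ (q - 1) := by
        rw [lintegral_mul_const'' _ hFq.lintegral_prod_right', lintegral_lintegral_swap hFq]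
    _ ≤ (∫⁻ _, C ^ q ∂μ) * μ univ ^ (q - 1) := by gcongr ?_ * _; exact lintegral_mono_ae hC
    _ = (C * μ univ) ^ q := by
        rw [lintegral_const, mul_assoc, ENNReal.mul_rpow_of_nonneg _ _ (by linarith)]
        nth_rw 1 [← ENNReal.rpow_one (μ univ)]
        rw [← ENNReal.rpow_add_of_nonneg _ _ one_pos.le (by linarith), add_sub_cancel]

theorem eLpNorm_integral_le_mul_measure_univ {p : ℝ≥0∞} (hp : 1 ≤ p) {F : α × β → E}
    (hF : AEStronglyMeasurable F (ρ.prod μ)) {C : ℝ≥0∞}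
    (hC : ∀ᵐ b ∂μ, eLpNorm (fun a ↦ F (a, b)) p ρ ≤ C) :
    eLpNorm (fun a ↦ ∫ b, F (a, b) ∂μ) p ρ ≤ C * μ univ := by
  rcases eq_or_ne p ∞ with rfl | hp_top
  · rw [eLpNorm_exponent_top]
    refine eLpNormEssSup_le_of_ae_enorm_bound ?_
    filter_upwards [ae_ae_enorm_le_of_ae_eLpNorm_top_le hF hC] with a ha
    calc ‖∫ b, F (a, b) ∂μ‖ₑ
        ≤ ∫⁻ b, ‖F (a, b)‖ₑ ∂μ := enorm_integral_le_lintegral_enorm _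
      _ ≤ ∫⁻ _, C ∂μ := lintegral_mono_ae ha
      _ = C * μ univ := lintegral_const C
  · have hp_zero : p ≠ 0 := (one_pos.trans_le hp).ne'
    have hq : 1 ≤ p.toReal := by
      simpa only [ENNReal.toReal_one] using ENNReal.toReal_mono hp_top hp
    have hq0 : 0 < p.toReal := one_pos.trans_le hq
    simp only [eLpNorm_eq_eLpNorm' hp_zero hp_top] at hC ⊢
    rw [← ENNReal.rpow_le_rpow_iff hq0, ← lintegral_rpow_enorm_eq_rpow_eLpNorm' hq0]
    refine lintegral_enorm_integral_rpow_le hq hF ?_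
    filter_upwards [hC] with b hb
    rw [lintegral_rpow_enorm_eq_rpow_eLpNorm' hq0]
    gcongr

end AveragesOfLp

theorem memLp_integral_comp_sub {G E : Type*} [AddGroup G] [MeasurableSpace G] [MeasurableAdd₂ G]
    [MeasurableNeg G] [NormedAddCommGroup E] [NormedSpace ℝ E] {ρ : Measure G} [SFinite ρ]
    [ρ.IsAddRightInvariant] {p : ℝ≥0∞} (hp : 1 ≤ p) {y : G → E} (hy : MemLp y p ρ)
    (μ : Measure G) [IsFiniteMeasure μ] :
    MemLp (fun t ↦ ∫ s, y (t - s) ∂μ) p ρ := by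
  have hmeas : AEStronglyMeasurable (fun z : G × G ↦ y (z.1 - z.2)) (ρ.prod μ) :=
    hy.1.comp_quasiMeasurePreserving (quasiMeasurePreserving_sub_of_right_invariant ρ μ)
  have htranslate (s : G) : eLpNorm (fun t ↦ y (t - s)) p ρ = eLpNorm y p ρ :=
    eLpNorm_comp_measurePreserving hy.1 (measurePreserving_sub_right ρ s)
  refine ⟨hmeas.integral_prod_right', ?_⟩
  exact (eLpNorm_integral_le_mul_measure_univ hp hmeas
    (ae_of_all μ fun s ↦ (htranslate s).le)).trans_lt (ENNReal.mul_lt_top hy.2 (measure_lt_top μ _))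

lemma memLp_iff_integrable_abs_rpow {α : Type*} [MeasurableSpace α] {μ : Measure α} {p : ℝ}
    (hp : 0 < p) {g : α → ℝ} (hg : AEStronglyMeasurable g μ) :
    MemLp g (ENNReal.ofReal p) μ ↔ Integrable (fun t ↦ |g t| ^ p) μ := by
  rw [← integrable_norm_rpow_iff hg (ENNReal.ofReal_pos.2 hp).ne' ENNReal.ofReal_ne_top,
    ENNReal.toReal_ofReal hp.le]
  rfl

section HalfLine

variable {E : Type*} [NormedAddCommGroup E] {a θ : ℝ} {p : ℝ≥0∞} {g x : ℝ → E}

lemma intervalIntegrable_of_locallyIntegrableOn_Ici (hg : LocallyIntegrableOn g (Ici a)) {b c : ℝ}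
    (hb : a ≤ b) (hc : a ≤ c) : IntervalIntegrable g volume b c :=
  (hg.integrableOn_compact_subset (ordConnected_Ici.uIcc_subset hb hc)
    isCompact_uIcc).intervalIntegrable

lemma memLp_Ici_comp_add_right (hg : MemLp g p (volume.restrict (Ici a))) (hθ : 0 ≤ θ) :
    MemLp (fun t ↦ g (t + θ)) p (volume.restrict (Ici a)) := by
  have hshift := (measurePreserving_add_right volume θ).restrict_preimage
    (measurableSet_Ici (a := a))
  have hsubset : Ici a ⊆ (· + θ) ⁻¹' Ici a := fun t ht ↦ le_add_of_le_of_nonneg ht hθ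
  exact (hg.comp_measurePreserving hshift).mono_measure (Measure.restrict_mono_set volume hsubset)

variable [NormedSpace ℝ E]

lemma continuousOn_Ici_primitive (hg : LocallyIntegrableOn g (Ici a)) :
    ContinuousOn (fun t ↦ ∫ s in a..t, g s) (Ici a) := by
  intro t ht
  have hat : a ≤ t + 1 := (mem_Ici.1 ht).trans (lt_add_one t).le
  have hcont : ContinuousOn (fun t ↦ ∫ s in a..t, g s) (Icc a (t + 1)) := by
    rw [← uIcc_of_le hat]
    exact intervalIntegral.continuousOn_primitive_interval'
      (intervalIntegrable_of_locallyIntegrableOn_Ici hg le_rfl hat) left_mem_uIcc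
  refine (hcont t ⟨ht, (lt_add_one t).le⟩).mono_of_mem_nhdsWithin ?_
  exact inter_mem_nhdsWithin (Ici a) (Iic_mem_nhds (lt_add_one t))

lemma memLp_intervalIntegral_add_right (hp : 1 ≤ p) (hg : MemLp g p volume) (θ : ℝ) :
    MemLp (fun t ↦ ∫ s in t..(t + θ), g s) p volume := by
  have hconv : (fun t ↦ ∫ s in t..(t + θ), g s) = fun t ↦ ∫ s in (-θ)..0, g (t - s) := by
    ext t
    rw [intervalIntegral.integral_comp_sub_left, sub_zero, sub_neg_eq_add]
  rw [hconv]
  exact (memLp_integral_comp_sub hp hg _).sub (memLp_integral_comp_sub hp hg _)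

lemma memLp_Ici_intervalIntegral_add_right (hp : 1 ≤ p)
    (hg : MemLp g p (volume.restrict (Ici a))) (hθ : 0 ≤ θ) :
    MemLp (fun t ↦ ∫ s in t..(t + θ), g s) p (volume.restrict (Ici a)) := by
  have hg_extend : MemLp ((Ici a).indicator g) p volume :=
    (memLp_indicator_iff_restrict measurableSet_Ici).2 hg
  refine ((memLp_intervalIntegral_add_right hp hg_extend θ).restrict (Ici a)).ae_eq ?_
  filter_upwards [ae_restrict_mem measurableSet_Ici] with t ht
  refine intervalIntegral.integral_congr fun s hs ↦ indicator_of_mem ?_ g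
  exact ordConnected_Ici.uIcc_subset ht (le_add_of_le_of_nonneg ht hθ) hs

lemma setIntegral_Icc_comp_sub_eq_integral_indicator (μ : Measure ℝ) (x : ℝ → E) (t : ℝ) :
    ∫ s in Icc 0 t, x (t - s) ∂μ
      = ∫ s, (Ici (0 : ℝ)).indicator x (t - s) ∂(μ.restrict (Ici 0)) := by
  rw [← integral_indicator measurableSet_Icc, ← integral_indicator measurableSet_Ici]
  congr 1 with s
  by_cases hs : 0 ≤ s <;> by_cases hst : s ≤ t <;> simp [indicator, hs, hst]

theorem memLp_Ici_setIntegral_Icc_comp_sub (hp : 1 ≤ p)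
    (hx : MemLp x p (volume.restrict (Ici 0))) (μ : Measure ℝ) [IsFiniteMeasure μ] :
    MemLp (fun t ↦ ∫ s in Icc 0 t, x (t - s) ∂μ) p (volume.restrict (Ici 0)) := by
  have hx_extend : MemLp ((Ici 0).indicator x) p volume :=
    (memLp_indicator_iff_restrict measurableSet_Ici).2 hx
  simp only [setIntegral_Icc_comp_sub_eq_integral_indicator]
  exact (memLp_integral_comp_sub hp hx_extend _).restrict (Ici 0)

variable {f x' : ℝ → E}

lemma intervalIntegral_eq_sub_of_ae_eq_add (hx' : LocallyIntegrableOn x' (Ici a))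
    (hFTC : ∀ t ≥ a, x t = x a + ∫ s in a..t, x' s) (hg : LocallyIntegrableOn g (Ici a))
    (heq : ∀ᵐ t ∂volume.restrict (Ioi a), x' t = g t + f t) {b c : ℝ} (hb : a ≤ b) (hc : a ≤ c) :
    ∫ s in b..c, f s = x c - x b - ∫ s in b..c, g s := by
  have hint {h : ℝ → E} (hh : LocallyIntegrableOn h (Ici a)) {u v : ℝ} (hu : a ≤ u) (hv : a ≤ v) :=
    intervalIntegrable_of_locallyIntegrableOn_Ici hh hu hv
  have hincrement : ∫ s in b..c, x' s = x c - x b := by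
    rw [hFTC c hc, hFTC b hb, add_sub_add_left_eq_sub,
      intervalIntegral.integral_interval_sub_left (hint hx' le_rfl hc) (hint hx' le_rfl hb)]
  have hf : ∫ s in b..c, f s = ∫ s in b..c, (x' s - g s) := by
    refine intervalIntegral.integral_congr_ae ?_
    filter_upwards [(ae_restrict_iff' measurableSet_Ioi).1 heq] with s hs hsbc
    rw [hs ((le_min hb hc).trans_lt hsbc.1), add_sub_cancel_left]
  rw [hf, intervalIntegral.integral_sub (hint hx' hb hc) (hint hg hb hc), hincrement]

theorem memLp_Ici_intervalIntegral_of_ae_eq_add (hp : 1 ≤ p)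
    (hx' : LocallyIntegrableOn x' (Ici a)) (hFTC : ∀ t ≥ a, x t = x a + ∫ s in a..t, x' s)
    (heq : ∀ᵐ t ∂volume.restrict (Ioi a), x' t = g t + f t)
    (hx : MemLp x p (volume.restrict (Ici a))) (hg : MemLp g p (volume.restrict (Ici a)))
    (hθ : 0 ≤ θ) :
    MemLp (fun t ↦ ∫ s in t..(t + θ), f s) p (volume.restrict (Ici a)) := by
  have hg_loc : LocallyIntegrableOn g (Ici a) :=
    locallyIntegrableOn_of_locallyIntegrable_restrict (hg.locallyIntegrable hp)
  refine (((memLp_Ici_comp_add_right hx hθ).sub hx).sub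
    (memLp_Ici_intervalIntegral_add_right hp hg hθ)).ae_eq ?_
  filter_upwards [ae_restrict_mem measurableSet_Ici] with t ht
  exact (intervalIntegral_eq_sub_of_ae_eq_add hx' hFTC hg_loc heq ht
    (le_add_of_le_of_nonneg ht hθ)).symm

end HalfLine

/-- The signed kernel is written as a difference `μ - ν` of finite measures, so that `x` can be
vector-valued. -/
theorem solution_Lp_implies_interval_average_Lp_general {E : Type*} [NormedAddCommGroup E]
    [NormedSpace ℝ E] [CompleteSpace E] {p : ℝ≥0∞} (hp : 1 ≤ p) (μ ν : Measure ℝ)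
    [IsFiniteMeasure μ] [IsFiniteMeasure ν] {f x x' : ℝ → E}
    (hx' : LocallyIntegrableOn x' (Ici 0)) (hFTC : ∀ t ≥ 0, x t = x 0 + ∫ s in (0 : ℝ)..t, x' s)
    (hode : ∀ᵐ t ∂volume.restrict (Ioi 0), x' t =
      ((∫ s in Icc 0 t, x (t - s) ∂μ) - ∫ s in Icc 0 t, x (t - s) ∂ν) + f t)
    (hx : MemLp x p (volume.restrict (Ici 0))) {θ : ℝ} (hθ : 0 ≤ θ) :
    MemLp (fun t ↦ ∫ s in t..(t + θ), f s) p (volume.restrict (Ici 0)) :=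
  memLp_Ici_intervalIntegral_of_ae_eq_add hp hx' hFTC hode hx
    ((memLp_Ici_setIntegral_Icc_comp_sub hp hx μ).sub
      (memLp_Ici_setIntegral_Icc_comp_sub hp hx ν)) hθ

/-- (B) ⟹ (A) of Theorem 2.3: if `x` is a locally absolutely continuous
solution of `x'(t) = ∫_{[0,t]} x(t-s) dν(s) + f(t)` (a.e. `t > 0`) with `x(0) = ξ`, and
`x ∈ L^p([0,∞))`, then for every `θ ∈ (0,1]` the interval average `t ↦ ∫_t^{t+θ} f(s) ds`
belongs to `L^p([0,∞))`. -/
theorem solution_Lp_implies_interval_average_Lp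
    (p : ℝ) (hp : 1 ≤ p)
    (ν : MeasureTheory.SignedMeasure ℝ)
    (hν : ν.restrict (Iio 0) = 0)
    (f : ℝ → ℝ)
    (hf : LocallyIntegrableOn f (Ici 0))
    (ξ : ℝ) (x x' : ℝ → ℝ)
    (hx'loc : LocallyIntegrableOn x' (Ici 0))
    (hx0 : x 0 = ξ)
    (hFTC : ∀ t ≥ (0:ℝ), x t = ξ + ∫ s in (0:ℝ)..t, x' s)
    (hode : ∀ᵐ t ∂(volume.restrict (Ioi (0:ℝ))),
      x' t = signedSetIntegral ν (fun s => x (t - s)) (Icc 0 t) + f t)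
    (hxLp : IntegrableOn (fun t => |x t| ^ p) (Ici 0)) :
    ∀ θ ∈ Ioc (0:ℝ) 1,
      IntegrableOn (fun t => |∫ s in t..(t + θ), f s| ^ p) (Ici 0) := by
  intro θ hθ
  subst hx0
  have hx_cont : ContinuousOn x (Ici 0) :=
    (continuousOn_const.add (continuousOn_Ici_primitive hx'loc)).congr hFTC
  have hx : MemLp x (ENNReal.ofReal p) (volume.restrict (Ici 0)) :=
    (memLp_iff_integrable_abs_rpow (one_pos.trans_le hp)
      (hx_cont.aestronglyMeasurable measurableSet_Ici)).2 hxLp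
  have hf_avg := solution_Lp_implies_interval_average_Lp_general (ENNReal.one_le_ofReal.2 hp)
    _ _ hx'loc hFTC hode hx hθ.1.le
  exact (memLp_iff_integrable_abs_rpow (one_pos.trans_le hp) hf_avg.1).1 hf_avg
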